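/- Assume f satisfies (f1) and (f2), let k ≥ 2, and let α* ∈ G_k. Then there exists δ₀ > 0 such that (α*−δ₀, α*+δ₀) ⊆ N_{k−1} \ F̃_k. -/

import Mathlib

open Set Filter MeasureTheory

namespace Paper

noncomputable section

/-- `F s = ∫₀ˢ f t dt`. -/
def Fint (f : ℝ → ℝ) (s : ℝ) : ℝ := ∫ t in (0:ℝ)..s, f t

/-- Hypothesis (f1): `f` is odd, `f 0 = 0`, there are `β > b > 0` with `f > 0` on `(b,∞)`,
`f ≤ 0`, `f ≢ 0` on `[0,b]`, and `F β = 0`. -/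
def Hf1 (f : ℝ → ℝ) (b β : ℝ) : Prop :=
  (∀ s, f (-s) = -f s) ∧ f 0 = 0 ∧ 0 < b ∧ b < β ∧
    (∀ s, b < s → 0 < f s) ∧ (∀ s ∈ Icc (0:ℝ) b, f s ≤ 0) ∧
    (∃ s ∈ Icc (0:ℝ) b, f s ≠ 0) ∧ Fint f β = 0

/-- Hypothesis (f2): `f` continuous on `[0,∞)`, C¹ on `(0,∞)`, `f' ∈ L¹(0,1)`. -/
def Hf2 (f : ℝ → ℝ) : Prop :=
  ContinuousOn f (Ici 0) ∧ (∀ s : ℝ, 0 < s → DifferentiableAt ℝ f s) ∧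
    ContinuousOn (deriv f) (Ioi 0) ∧ IntegrableOn (deriv f) (Ioo 0 1)

/-- Hypothesis (f3): `f s ≥ f' s * (s - β)` for `s ≥ β`. -/
def Hf3 (f : ℝ → ℝ) (β : ℝ) : Prop := ∀ s, β ≤ s → deriv f s * (s - β) ≤ f s

/-- Hypothesis (f4): `(F/f)' s ≥ (n-2)/(2n)` for `s > β`. -/
def Hf4 (n : ℕ) (f : ℝ → ℝ) (β : ℝ) : Prop :=
  ∀ s, β < s → ((n : ℝ) - 2) / (2 * (n : ℝ)) ≤ deriv (fun t => Fint f t / f t) s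

/-- Hypothesis (f4'): `(F/f)' s ≥ (n-2)/2` for `s > β`. -/
def Hf4' (n : ℕ) (f : ℝ → ℝ) (β : ℝ) : Prop :=
  ∀ s, β < s → ((n : ℝ) - 2) / 2 ≤ deriv (fun t => Fint f t / f t) s

/-- Hypothesis (f5): `s ↦ s f' s / f s` is nonincreasing on `[β,∞)`. -/
def Hf5 (f : ℝ → ℝ) (β : ℝ) : Prop := AntitoneOn (fun s => s * deriv f s / f s) (Ici β)

/-- Hypothesis (f6): `β f' β / f β ≤ n/(n-2)`. -/
def Hf6 (n : ℕ) (f : ℝ → ℝ) (β : ℝ) : Prop := β * deriv f β / f β ≤ (n : ℝ) / ((n : ℝ) - 2)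

/-- Hypothesis (f1'): `f 0 = 0` and `s f s > 0` for `s > 0`. -/
def Hf1' (f : ℝ → ℝ) : Prop := f 0 = 0 ∧ ∀ s : ℝ, 0 < s → 0 < s * f s

/-- Hypothesis (f3'): `f s ≥ s f' s` for `s > 0`, with strict inequality at points
arbitrarily close to `0`. -/
def Hf3' (f : ℝ → ℝ) : Prop :=
  (∀ s : ℝ, 0 < s → s * deriv f s ≤ f s) ∧
    ∀ ε : ℝ, 0 < ε → ∃ s ∈ Ioo (0:ℝ) ε, s * deriv f s < f s

/-- `v` is a C² solution of (E) on `(0,∞)`, continuous on `[0,∞)`,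
with `v 0 = α` and `v' 0 = 0`. -/
def IVPsol (n : ℕ) (f : ℝ → ℝ) (α : ℝ) (v : ℝ → ℝ) : Prop :=
  v 0 = α ∧ deriv v 0 = 0 ∧ ContinuousOn v (Ici 0) ∧
    (∀ r : ℝ, 0 < r → DifferentiableAt ℝ v r ∧ DifferentiableAt ℝ (deriv v) r) ∧
    (∀ r : ℝ, 0 < r → deriv (deriv v) r + ((n : ℝ) - 1) / r * deriv v r + f (v r) = 0)

/-- The family `α ↦ u α` of solutions of the IVP, with `u α r` and `u' α r`
continuous in `(α, r)`. -/
def Family (n : ℕ) (f : ℝ → ℝ) (u : ℝ → ℝ → ℝ) : Prop :=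
  (∀ α : ℝ, 0 < α → IVPsol n f α (u α)) ∧
    ContinuousOn (fun p : ℝ × ℝ => u p.1 p.2) (Ioi 0 ×ˢ Ici 0) ∧
    ContinuousOn (fun p : ℝ × ℝ => deriv (u p.1) p.2) (Ioi 0 ×ˢ Ici 0)

/-- The set whose supremum is `Z_k α`, given `T = T_{k-1} α`. -/
def ZsetAux (u : ℝ → ℝ → ℝ) (k : ℕ) (T α : ℝ) : Set ℝ :=
  {r | T < r ∧ ∀ s ∈ Ioo T r, (-1 : ℝ) ^ k * u α s < 0 ∧ 0 < (-1 : ℝ) ^ k * deriv (u α) s}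

/-- The pair `(Z_k, T_k)`, with `T₀ = 0`;
`Z_k α = sup {r > T_{k-1} α | (-1)^k u < 0, (-1)^k u' > 0 on (T_{k-1} α, r)}` and
`T_k α = inf {r > Z_k α | u'(r, α) = 0}`. -/
def ZT (u : ℝ → ℝ → ℝ) : ℕ → (ℝ → ℝ) × (ℝ → ℝ)
  | 0 => (fun _ => 0, fun _ => 0)
  | k + 1 =>
    let Z : ℝ → ℝ := fun α => sSup (ZsetAux u (k + 1) ((ZT u k).2 α) α)
    (Z, fun α => sInf {r | Z α < r ∧ deriv (u α) r = 0})

/-- `Z_k α` (as a real number; the genuine value when the defining set is bounded above). -/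
def Zk (u : ℝ → ℝ → ℝ) (k : ℕ) (α : ℝ) : ℝ := (ZT u k).1 α

/-- `T_k α`, with `T₀ = 0`. -/
def Tk (u : ℝ → ℝ → ℝ) (k : ℕ) (α : ℝ) : ℝ := (ZT u k).2 α

/-- The defining set of `Z_k α`; `Z_k α = ∞` iff this set is unbounded above. -/
def ZsetK (u : ℝ → ℝ → ℝ) (k : ℕ) (α : ℝ) : Set ℝ := ZsetAux u k (Tk u (k - 1) α) α

open Classical in
/-- The value of `u (·, α)` at `Z_k α`, as a limit `r → ∞` when `Z_k α = ∞`. -/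
def uAtZ (u : ℝ → ℝ → ℝ) (k : ℕ) (α : ℝ) : ℝ :=
  if BddAbove (ZsetK u k α) then u α (Zk u k α) else limUnder atTop (u α)

open Classical in
/-- The value of `u' (·, α)` at `Z_k α`, as a limit `r → ∞` when `Z_k α = ∞`. -/
def duAtZ (u : ℝ → ℝ → ℝ) (k : ℕ) (α : ℝ) : ℝ :=
  if BddAbove (ZsetK u k α) then deriv (u α) (Zk u k α) else limUnder atTop (deriv (u α))

open Classical in
/-- `Z_k α` as an extended real number. -/
def ZkE (u : ℝ → ℝ → ℝ) (k : ℕ) (α : ℝ) : WithTop ℝ :=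
  if BddAbove (ZsetK u k α) then (Zk u k α : WithTop ℝ) else ⊤

/-- Membership in `F̃_k` (for `α ∈ N_{k-1}`): `(-1)^k u' (r, α) < 0` for all `r > Z_{k-1} α`. -/
def Ftil (u : ℝ → ℝ → ℝ) (k : ℕ) (α : ℝ) : Prop :=
  ∀ r, Zk u (k - 1) α < r → (-1 : ℝ) ^ k * deriv (u α) r < 0

/-- The sets `N_k` (with `N₀ := (0,∞)`). -/
def Nk (u : ℝ → ℝ → ℝ) : ℕ → Set ℝ
  | 0 => Ioi 0
  | 1 => {α | 0 < α ∧ uAtZ u 1 α = 0 ∧ duAtZ u 1 α < 0}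
  | k + 2 => {α | α ∈ Nk u (k + 1) ∧ ¬Ftil u (k + 2) α ∧ uAtZ u (k + 2) α = 0 ∧
      0 < (-1 : ℝ) ^ (k + 2) * duAtZ u (k + 2) α}

/-- The sets `G_k`. -/
def Gk (u : ℝ → ℝ → ℝ) : ℕ → Set ℝ
  | 0 => ∅
  | 1 => {α | 0 < α ∧ uAtZ u 1 α = 0 ∧ duAtZ u 1 α = 0}
  | k + 2 => {α | α ∈ Nk u (k + 1) ∧ ¬Ftil u (k + 2) α ∧ uAtZ u (k + 2) α = 0 ∧
      duAtZ u (k + 2) α = 0}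

/-- The set `F̃_k` (for `k ≥ 2`). -/
def FtilSet (u : ℝ → ℝ → ℝ) (k : ℕ) : Set ℝ := {α | α ∈ Nk u (k - 1) ∧ Ftil u k α}

/-- The set `F_k` (for `k ≥ 2`). -/
def Fk (u : ℝ → ℝ → ℝ) (k : ℕ) : Set ℝ :=
  {α | α ∈ Nk u (k - 1) ∧ ¬Ftil u k α ∧ (-1 : ℝ) ^ k * uAtZ u k α < 0}

/-- The sets `P_k`. -/
def Pk (u : ℝ → ℝ → ℝ) : ℕ → Set ℝ
  | 0 => ∅
  | 1 => {α | 0 < α ∧ 0 < uAtZ u 1 α}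
  | k + 2 => FtilSet u (k + 2) ∪ Fk u (k + 2)

/-- The set of extremal points (zeros of `u' (·, α)`) in `[0, A]`. -/
def ExtSet (u : ℝ → ℝ → ℝ) (α A : ℝ) : Set ℝ := {r | r ∈ Icc 0 A ∧ deriv (u α) r = 0}

/-- The conclusion of the δ₁-lemma (Lemma 4.1): every solution with initial value in
`(α*-δ₁, α*+δ₁)` has exactly `k` extremal points in `[0, T_{k-1}(α*) + a]`, with minimum
values `< -β` and maximum values `> β`; moreover any two such solutions intersect between
any two of their consecutive extremal points, and in `(T_{k-1}(α*), Z_k(α*))`. -/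
def DeltaOneLemma (f : ℝ → ℝ) (β : ℝ) (u : ℝ → ℝ → ℝ) (k : ℕ) (αs a δ₁ : ℝ) : Prop :=
  0 < a ∧ 0 < δ₁ ∧
    (∀ α ∈ Ioo (αs - δ₁) (αs + δ₁),
      (ExtSet u α (Tk u (k - 1) αs + a)).Finite ∧
        (ExtSet u α (Tk u (k - 1) αs + a)).ncard = k ∧
        ∀ r ∈ ExtSet u α (Tk u (k - 1) αs + a),
          (IsLocalMin (u α) r → u α r < -β) ∧ (IsLocalMax (u α) r → β < u α r)) ∧
    ∀ α₁ ∈ Ioo (αs - δ₁) (αs + δ₁), ∀ α₂ ∈ Ioo (αs - δ₁) (αs + δ₁), α₁ < α₂ →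
      (∀ i : ℕ, 1 ≤ i → i ≤ k - 1 →
        ∃ t, max (Tk u (i - 1) α₁) (Tk u (i - 1) α₂) < t ∧
          t < min (Tk u i α₁) (Tk u i α₂) ∧ u α₁ t = u α₂ t) ∧
      ∃ t, Tk u (k - 1) αs < t ∧ (BddAbove (ZsetK u k αs) → t < Zk u k αs) ∧
        u α₁ t = u α₂ t

/-- `ρ` is the inverse of the monotone branch of `v` on `[t₁, t₂]`, whose set of values
is `[m, M]`. -/
def InvBranch (v ρ : ℝ → ℝ) (t₁ t₂ m M : ℝ) : Prop :=
  (∀ s ∈ Icc m M, ρ s ∈ Icc t₁ t₂ ∧ v (ρ s) = s) ∧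
    ∀ s ∈ Ioo m M, HasDerivAt ρ (1 / deriv v (ρ s)) s

/-- `ρ` inverts a decreasing branch of `v` over the value interval `[m, M]`, along which
`(v')² + 2F > 0`. -/
def DecBranchInv (f : ℝ → ℝ) (v ρ : ℝ → ℝ) (m M : ℝ) : Prop :=
  ∀ s ∈ Icc m M, 0 ≤ ρ s ∧ v (ρ s) = s ∧ deriv v (ρ s) < 0 ∧
    HasDerivAt ρ (1 / deriv v (ρ s)) s ∧ 0 < (deriv v (ρ s)) ^ 2 + 2 * Fint f s

/-- The functional `Q(s) = -4 (F/f)(s) r/r' - r²/(r')² - 2 r² F(s) + H(s)` computed along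
the branch inverse `ρ`. -/
def Qfun (f H ρ : ℝ → ℝ) (s : ℝ) : ℝ :=
  -4 * (Fint f s / f s) * (ρ s / deriv ρ s) - (ρ s) ^ 2 / (deriv ρ s) ^ 2 -
    2 * (ρ s) ^ 2 * Fint f s + H s

/-- The functional `P(s) = -2n (F/f)(s) r^{n-1}/r' - r^n/(r')² - 2 r^n F(s)`. -/
def Pfun (n : ℕ) (f : ℝ → ℝ) (ρ : ℝ → ℝ) (s : ℝ) : ℝ :=
  -(2 * (n : ℝ)) * (Fint f s / f s) * (ρ s ^ (n - 1) / deriv ρ s) -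
    ρ s ^ n / (deriv ρ s) ^ 2 - 2 * ρ s ^ n * Fint f s

/-- The functional `W(s) = r(s) √((u'(r(s)))² + 2 F(s))`. -/
def Wfun (f v ρ : ℝ → ℝ) (s : ℝ) : ℝ :=
  ρ s * Real.sqrt ((deriv v (ρ s)) ^ 2 + 2 * Fint f s)

/-- The functional `W̃(s) = r(s)^{n-1} √((u'(r(s)))² + 2 F(s))`. -/
def Wtil (n : ℕ) (f : ℝ → ℝ) (v ρ : ℝ → ℝ) (s : ℝ) : ℝ :=
  ρ s ^ (n - 1) * Real.sqrt ((deriv v (ρ s)) ^ 2 + 2 * Fint f s)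

/-- `v` changes sign at `z ∈ (0,∞)`: `v z = 0` and `v` takes both signs in every
neighborhood of `z` (within `(0,∞)`). -/
def SignChange (v : ℝ → ℝ) (z : ℝ) : Prop :=
  v z = 0 ∧ ∀ ε : ℝ, 0 < ε →
    (∃ x ∈ Ioo (z - ε) (z + ε) ∩ Ioi 0, 0 < v x) ∧
    (∃ x ∈ Ioo (z - ε) (z + ε) ∩ Ioi 0, v x < 0)

/-- `v` has exactly `m` sign changes in `(0,∞)`. -/
def ExactSignChanges (v : ℝ → ℝ) (m : ℕ) : Prop :=
  {z | 0 < z ∧ SignChange v z}.Finite ∧ {z | 0 < z ∧ SignChange v z}.ncard = m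

/-- Bound state: a C² solution of (E) on `(0,∞)` with `v' 0 = 0` and `v r → 0` as `r → ∞`. -/
def BoundState (n : ℕ) (f : ℝ → ℝ) (v : ℝ → ℝ) : Prop :=
  ContinuousOn v (Ici 0) ∧
    (∀ r : ℝ, 0 < r → DifferentiableAt ℝ v r ∧ DifferentiableAt ℝ (deriv v) r) ∧
    (∀ r : ℝ, 0 < r → deriv (deriv v) r + ((n : ℝ) - 1) / r * deriv v r + f (v r) = 0) ∧
    deriv v 0 = 0 ∧ Tendsto v atTop (nhds 0)

/-- Solution of the Dirichlet problem on the ball of radius `R`. -/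
def DirichletSol (n : ℕ) (f : ℝ → ℝ) (R : ℝ) (v : ℝ → ℝ) : Prop :=
  ContinuousOn v (Icc 0 R) ∧
    (∀ r ∈ Ioo (0:ℝ) R, DifferentiableAt ℝ v r ∧ DifferentiableAt ℝ (deriv v) r) ∧
    (∀ r ∈ Ioo (0:ℝ) R, deriv (deriv v) r + ((n : ℝ) - 1) / r * deriv v r + f (v r) = 0) ∧
    deriv v 0 = 0 ∧ v R = 0

end
end Paper

open Paper Set Filter MeasureTheory

/-!
Between the turning point `T_k` and the zero `Z_{k+1}` the function `w = (-1)^k u` is positive and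
decreasing. While `0 ≤ w ≤ b` and `w' ≤ 0`, the equation `w'' + c w' + f(w) = 0` with `c ≥ 0` gives
`w'' ≥ 0`. Hence `w` cannot start descending from a turning point at height at most `b`, and a
descent that takes forever has `w' → 0`, so that the zeros defining `N_{k+1}` are finite. Above
height `b` the maximum principle forces `w' < 0` to the right of every turning point. This makes the
turning points nondegenerate, and since the zeros `Z_{k+1}` are transversal, both `T_k` and
`Z_{k+1}` persist and depend continuously on `α`, by induction on `k`.
-/

namespace Paper

open scoped Topology

/-! ### Real analysis -/

section RealAnalysis

lemma deriv_nonneg_of_isMaxOn_Icc {g : ℝ → ℝ} {g' a b x : ℝ} (hmax : IsMaxOn g (Icc a b) x)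
    (hx : x ∈ Ioc a b) (hg : HasDerivAt g g' x) : 0 ≤ g' := by
  have hcone : a - x ∈ posTangentConeAt (Icc a b) x :=
    sub_mem_posTangentConeAt_of_segment_subset <|
      (convex_Icc a b).segment_subset ⟨hx.1.le, hx.2⟩ (left_mem_Icc.2 (hx.1.le.trans hx.2))
  have h := hmax.localize.hasFDerivWithinAt_nonpos hg.hasFDerivAt.hasFDerivWithinAt hcone
  simp only [ContinuousLinearMap.toSpanSingleton_apply, smul_eq_mul] at h
  exact nonneg_of_mul_nonpos_right h (sub_neg.2 hx.1)

lemma neg_of_deriv_neg_of_nonneg {g g' : ℝ → ℝ} {a b : ℝ} (hab : a < b)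
    (hg : ContinuousOn g (Icc a b)) (hg' : ∀ x ∈ Ioc a b, HasDerivAt g (g' x) x) (ha : g a ≤ 0)
    (h : ∀ x ∈ Ioc a b, 0 ≤ g x → g' x < 0) : g b < 0 := by
  by_contra! hb
  have no_max : ∀ x ∈ Ioc a b, ¬IsMaxOn g (Icc a b) x := fun x hx hmax =>
    (deriv_nonneg_of_isMaxOn_Icc hmax hx (hg' x hx)).not_gt
      (h x hx (hb.trans (hmax (right_mem_Icc.2 hab.le))))
  obtain ⟨x, hx, hmax⟩ := isCompact_Icc.exists_isMaxOn (nonempty_Icc.2 hab.le) hg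
  rcases hx.1.eq_or_lt with rfl | hax
  · exact no_max b (right_mem_Ioc.2 hab) fun y hy => (hmax hy).trans (ha.trans hb)
  · exact no_max x ⟨hax, hx.2⟩ hmax

lemma exists_first_eq_of_lt_of_le {X Y : Type*} [ConditionallyCompleteLinearOrder X]
    [TopologicalSpace X] [OrderTopology X] [DenselyOrdered X] [LinearOrder Y] [TopologicalSpace Y]
    [OrderClosedTopology Y] {g : X → Y} {a b : X} {y : Y} (hab : a ≤ b)
    (hg : ContinuousOn g (Icc a b)) (ha : g a < y) (hb : y ≤ g b) :
    ∃ t ∈ Ioc a b, g t = y ∧ ∀ s ∈ Ico a t, g s < y := by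
  have hcompact : IsCompact (Icc a b ∩ g ⁻¹' Ici y) :=
    isCompact_Icc.of_isClosed_subset (hg.preimage_isClosed_of_isClosed isClosed_Icc isClosed_Ici)
      inter_subset_left
  obtain ⟨t, ⟨htab, hyt⟩, hmin⟩ := hcompact.exists_isLeast ⟨b, right_mem_Icc.2 hab, hb⟩
  obtain ⟨x, hx, hxy⟩ :=
    intermediate_value_Icc htab.1 (hg.mono (Icc_subset_Icc_right htab.2)) ⟨ha.le, hyt⟩
  have hxt : x = t := hx.2.antisymm (hmin ⟨⟨hx.1, hx.2.trans htab.2⟩, hxy.ge⟩)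
  have hty : g t = y := hxt ▸ hxy
  refine ⟨t, ⟨htab.1.lt_of_ne ?_, htab.2⟩, hty, fun s hs => ?_⟩
  · rintro rfl
    exact ha.ne hty
  · by_contra! hys
    exact hs.2.not_ge (hmin ⟨⟨hs.1, hs.2.le.trans htab.2⟩, hys⟩)

lemma exists_tendsto_atTop_of_antitoneOn {X Y : Type*} [LinearOrder X]
    [ConditionallyCompleteLinearOrder Y] [TopologicalSpace Y] [InfConvergenceClass Y] {g : X → Y}
    {a : X} (hg : AntitoneOn g (Ici a)) (hbdd : BddBelow (g '' Ici a)) :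
    ∃ l, Tendsto g atTop (𝓝 l) := by
  have hanti : Antitone fun x => g (max x a) := fun x y hxy =>
    hg (le_max_right x a) (le_max_right y a) (max_le_max_right a hxy)
  have hbdd' : BddBelow (range fun x => g (max x a)) :=
    hbdd.mono (range_subset_iff.2 fun x => mem_image_of_mem g (le_max_right x a))
  refine ⟨_, (tendsto_atTop_ciInf hanti hbdd').congr' ?_⟩
  filter_upwards [eventually_ge_atTop a] with x hx
  rw [max_eq_left hx]

lemma tendsto_deriv_zero_of_convexOn {g : ℝ → ℝ} {R l : ℝ} (hg : ConvexOn ℝ (Ici R) g)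
    (hdiff : ∀ r ∈ Ici R, DifferentiableAt ℝ g r) (hlim : Tendsto g atTop (𝓝 l)) :
    Tendsto (deriv g) atTop (𝓝 0) := by
  have hslope_left : Tendsto (fun r => slope g (r - 1) r) atTop (𝓝 0) := by
    simpa [slope_def_field, sub_eq_add_neg] using
      hlim.sub (hlim.comp (tendsto_atTop_add_const_right atTop (-1) tendsto_id))
  have hslope_right : Tendsto (fun r => slope g r (r + 1)) atTop (𝓝 0) := by
    simpa [slope_def_field] using
      (hlim.comp (tendsto_atTop_add_const_right atTop 1 tendsto_id)).sub hlim
  refine tendsto_of_tendsto_of_tendsto_of_le_of_le' hslope_left hslope_right ?_ ?_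
  · filter_upwards [eventually_ge_atTop (R + 1)] with r hr
    have hRr : R ≤ r - 1 := le_sub_iff_add_le.2 hr
    have hr1 : r - 1 < r := sub_one_lt r
    exact hg.slope_le_deriv hRr (hRr.trans hr1.le) hr1 (hdiff r (hRr.trans hr1.le))
  · filter_upwards [eventually_ge_atTop R] with r hr
    have hr1 : r < r + 1 := lt_add_one r
    exact hg.deriv_le_slope hr (le_trans hr hr1.le) hr1 (hdiff r hr)

lemma const_mul_limUnder_eq {X : Type*} {l : Filter X} [l.NeBot] {g : X → ℝ} {c x : ℝ}
    (hc : c ≠ 0) (h : Tendsto (fun r => c * g r) l (𝓝 x)) : c * limUnder l g = x := by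
  have hg : Tendsto g l (𝓝 (c⁻¹ * x)) := by simpa [hc] using h.const_mul c⁻¹
  rw [hg.limUnder_eq, mul_inv_cancel_left₀ hc]

lemma mem_nhds_and_continuousAt_of_forall_eventually {X Y : Type*} [TopologicalSpace X]
    [TopologicalSpace Y] {g : X → Y} {a : X} {S : Set X}
    (h : ∀ U ∈ 𝓝 (g a), ∀ᶠ x in 𝓝 a, x ∈ S ∧ g x ∈ U) : S ∈ 𝓝 a ∧ ContinuousAt g a :=
  ⟨(h univ univ_mem).mono fun _ hx => hx.1, fun U hU => (h U hU).mono fun _ hx => hx.2⟩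

lemma eventually_forall_mem_Ioc {X Y : Type*} [TopologicalSpace X] [LinearOrder Y]
    [TopologicalSpace Y] [OrderTopology Y] [CompactIccSpace Y] [NoMinOrder Y] {P : X → Y → Prop}
    {T : X → Y} {a : X} {R : Y} (hT : ContinuousAt T a)
    (hleft : ∀ᶠ p in 𝓝 (a, T a), T p.1 < p.2 → P p.1 p.2)
    (h : ∀ s ∈ Ioc (T a) R, ∀ᶠ p in 𝓝 (a, s), P p.1 p.2) :
    ∀ᶠ x in 𝓝 a, ∀ s ∈ Ioc (T x) R, P x s := by
  obtain ⟨m, hm⟩ := exists_lt (T a)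
  have hIcc : ∀ᶠ x in 𝓝 a, ∀ s ∈ Icc m R, T x < s → P x s := by
    refine isCompact_Icc.eventually_forall_of_forall_eventually fun s hs => ?_
    rcases lt_trichotomy s (T a) with hlt | rfl | hgt
    · have hlt' : ∀ᶠ p : X × Y in 𝓝 (a, s), p.2 < T p.1 :=
        continuousAt_snd.eventually_lt (hT.comp_of_eq continuousAt_fst rfl) hlt
      exact hlt'.mono fun p hp hTp => absurd hTp hp.not_gt
    · exact hleft
    · exact (h s ⟨hgt, hs.2⟩).mono fun _ hp _ => hp
  filter_upwards [hIcc, hT.eventually (lt_mem_nhds hm)] with x hx hmx s hs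
  exact hx s ⟨(hmx.trans hs.1).le, hs.2⟩ hs.1

end RealAnalysis

/-! ### Solutions of the damped equation -/

/-- `f` is odd, nonpositive on `[0, b]` and positive beyond `b`: the sign pattern in (f1). -/
structure SignCondition (f : ℝ → ℝ) (b : ℝ) : Prop where
  odd : ∀ s, f (-s) = -f s
  pos : 0 < b
  nonpos : ∀ s ∈ Icc 0 b, f s ≤ 0
  pos_of_lt : ∀ s, b < s → 0 < f s

/-- `v` solves `v'' + c v' + f(v) = 0` on `(0, ∞)` with damping `c ≥ 0`, and `v`, `deriv v` are
continuous up to `0`, where differentiability of `v` is not required. The radial equation (E) is the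
case `c r = (n - 1) / r`. -/
structure DampedSol (c f v : ℝ → ℝ) : Prop where
  damping_nonneg : ∀ r, 0 < r → 0 ≤ c r
  continuousOn : ContinuousOn v (Ici 0)
  continuousOn_deriv : ContinuousOn (deriv v) (Ici 0)
  differentiableAt : ∀ r, 0 < r → DifferentiableAt ℝ v r
  hasDerivAt_deriv : ∀ r, 0 < r → HasDerivAt (deriv v) (-(c r * deriv v r + f (v r))) r

/-- The end points of the positive, strictly decreasing arcs of `v` issuing from `T`. -/
def descentSet (v : ℝ → ℝ) (T : ℝ) : Set ℝ :=
  {r | T < r ∧ ∀ s ∈ Ioo T r, 0 < v s ∧ deriv v s < 0}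

/-- `v` descends from `T` to its first zero `z`, which is transversal: this describes `z = Z_{k+1}`
in terms of `T = T_k`, for `v = (-1)^k u`. -/
structure DescendsTo (v : ℝ → ℝ) (T z : ℝ) : Prop where
  lt : T < z
  deriv_neg : ∀ s ∈ Ioc T z, deriv v s < 0
  eq_zero : v z = 0

/-- `T` is the first critical point of `v` after `z`, and `v` decreases strictly on `[z, T]`: this
describes `T = T_{k+1}` in terms of `z = Z_{k+1}`, for `v = (-1)^k u`. -/
structure TurnsAt (v : ℝ → ℝ) (z T : ℝ) : Prop where
  lt : z < T
  deriv_neg : ∀ s ∈ Ico z T, deriv v s < 0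
  deriv_eq_zero : deriv v T = 0

lemma TurnsAt.sInf_eq {v : ℝ → ℝ} {z T : ℝ} (h : TurnsAt v z T) :
    sInf {r | z < r ∧ deriv v r = 0} = T := by
  refine IsLeast.csInf_eq ⟨⟨h.lt, h.deriv_eq_zero⟩, fun r hr => ?_⟩
  by_contra! hrT
  exact (h.deriv_neg r ⟨hr.1.le, hrT⟩).ne hr.2

lemma pos_and_deriv_neg_of_lt_sSup_descentSet {v : ℝ → ℝ} {T s : ℝ}
    (hne : (descentSet v T).Nonempty) (hs : s ∈ Ioo T (sSup (descentSet v T))) :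
    0 < v s ∧ deriv v s < 0 := by
  obtain ⟨r, hr, hsr⟩ := exists_lt_of_lt_csSup hne hs.2
  exact hr.2 s ⟨hs.1, hsr⟩

lemma lt_sSup_descentSet {v : ℝ → ℝ} {T : ℝ} (hb : BddAbove (descentSet v T))
    (hne : (descentSet v T).Nonempty) : T < sSup (descentSet v T) := by
  obtain ⟨r, hr⟩ := hne
  exact hr.1.trans_le (le_csSup hb hr)

lemma pos_and_deriv_neg_of_not_bddAbove_descentSet {v : ℝ → ℝ} {T s : ℝ}
    (hb : ¬BddAbove (descentSet v T)) (hs : T < s) : 0 < v s ∧ deriv v s < 0 := by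
  obtain ⟨r, hr, hsr⟩ := not_bddAbove_iff.1 hb s
  exact hr.2 s ⟨hs, hsr⟩

namespace DampedSol

variable {c f v : ℝ → ℝ} {b T z r : ℝ}

lemma neg (hodd : ∀ s, f (-s) = -f s) (hv : DampedSol c f v) : DampedSol c f fun r => -v r := by
  have hderiv : deriv (fun r => -v r) = fun r => -deriv v r := funext fun r => deriv.fun_neg
  refine ⟨hv.damping_nonneg, hv.continuousOn.neg, ?_, fun r hr => (hv.differentiableAt r hr).neg,
    fun r hr => ?_⟩
  · rw [hderiv]
    exact hv.continuousOn_deriv.neg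
  · rw [hderiv, hodd]
    exact (hv.hasDerivAt_deriv r hr).neg.congr_deriv (by ring)

lemma strictAntiOn_Icc (hv : DampedSol c f v) (hT : 0 ≤ T) (h : ∀ s ∈ Ioo T r, deriv v s < 0) :
    StrictAntiOn v (Icc T r) :=
  strictAntiOn_of_deriv_neg (convex_Icc T r) (hv.continuousOn.mono fun _ hs => hT.trans hs.1)
    (by rwa [interior_Icc])

lemma antitoneOn_Ici (hv : DampedSol c f v) (hT : 0 ≤ T) (h : ∀ s, T < s → deriv v s < 0) :
    AntitoneOn v (Ici T) :=
  (strictAntiOn_of_deriv_neg (convex_Ici T) (hv.continuousOn.mono (Ici_subset_Ici.2 hT))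
    (by rwa [interior_Ici])).antitoneOn

lemma deriv_neg_of_forall_lt (hpos : ∀ s, b < s → 0 < f s) (hv : DampedSol c f v) (hT : 0 ≤ T)
    (hcrit : deriv v T = 0) (hTr : T < r) (hb : ∀ s ∈ Ioc T r, b < v s) : deriv v r < 0 := by
  refine neg_of_deriv_neg_of_nonneg hTr (hv.continuousOn_deriv.mono fun s hs => hT.trans hs.1)
    (fun s hs => hv.hasDerivAt_deriv s (hT.trans_lt hs.1)) hcrit.le fun s hs hds => ?_
  have hdamping := mul_nonneg (hv.damping_nonneg s (hT.trans_lt hs.1)) hds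
  linarith [hpos _ (hb s hs)]

lemma monotoneOn_deriv {D : Set ℝ} (hneg : ∀ s ∈ Icc 0 b, f s ≤ 0) (hv : DampedSol c f v)
    (hD : Convex ℝ D) (hD0 : D ⊆ Ici 0) (hb : ∀ s ∈ interior D, v s ∈ Icc 0 b)
    (hd : ∀ s ∈ interior D, deriv v s ≤ 0) : MonotoneOn (deriv v) D := by
  have hderiv : ∀ s ∈ interior D, HasDerivAt (deriv v) (-(c s * deriv v s + f (v s))) s :=
    fun s hs => hv.hasDerivAt_deriv s (by simpa using interior_mono hD0 hs)
  refine monotoneOn_of_deriv_nonneg hD (hv.continuousOn_deriv.mono hD0)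
    (fun s hs => (hderiv s hs).differentiableAt.differentiableWithinAt) fun s hs => ?_
  have hdamping := mul_nonpos_of_nonneg_of_nonpos
    (hv.damping_nonneg s (by simpa using interior_mono hD0 hs)) (hd s hs)
  rw [(hderiv s hs).deriv]
  linarith [hneg _ (hb s hs)]

lemma lt_of_descentSet_nonempty (hneg : ∀ s ∈ Icc 0 b, f s ≤ 0) (hv : DampedSol c f v)
    (hT : 0 ≤ T) (hcrit : deriv v T = 0) (hne : (descentSet v T).Nonempty) : b < v T := by
  obtain ⟨r, hTr, harc⟩ := hne
  by_contra! hle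
  have hanti := hv.strictAntiOn_Icc hT fun s hs => (harc s hs).2
  have hmono : MonotoneOn (deriv v) (Icc T r) := by
    refine hv.monotoneOn_deriv hneg (convex_Icc T r) (fun s hs => hT.trans hs.1) ?_ ?_ <;>
      rw [interior_Icc] <;> intro s hs
    · exact ⟨(harc s hs).1.le, (hanti.antitoneOn (left_mem_Icc.2 hTr.le) (Ioo_subset_Icc_self hs)
        hs.1.le).trans hle⟩
    · exact (harc s hs).2.le
  obtain ⟨s, hs⟩ := nonempty_Ioo.2 hTr
  have hcrit_le := hmono (left_mem_Icc.2 hTr.le) (Ioo_subset_Icc_self hs) hs.1.le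
  exact (harc s hs).2.not_ge (hcrit ▸ hcrit_le)

lemma deriv_tendsto_zero (hb : 0 < b) (hneg : ∀ s ∈ Icc 0 b, f s ≤ 0) (hv : DampedSol c f v)
    (harc : ∀ s, T < s → 0 < v s ∧ deriv v s < 0) (hlim : Tendsto v atTop (𝓝 0)) :
    Tendsto (deriv v) atTop (𝓝 0) := by
  obtain ⟨R, hR⟩ : ∃ R, ∀ s, R ≤ s → 0 < s ∧ T < s ∧ v s < b :=
    eventually_atTop.1 ((eventually_gt_atTop 0).and
      ((eventually_gt_atTop T).and (hlim.eventually (gt_mem_nhds hb))))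
  have hdiff : ∀ s ∈ Ici R, DifferentiableAt ℝ v s := fun s hs =>
    hv.differentiableAt s (hR s hs).1
  have hmono : MonotoneOn (deriv v) (Ici R) := by
    refine hv.monotoneOn_deriv hneg (convex_Ici R) (fun s hs => (hR s hs).1.le) ?_ ?_ <;>
      rw [interior_Ici] <;> intro s hs
    · exact ⟨(harc s (hR s hs.le).2.1).1.le, (hR s hs.le).2.2.le⟩
    · exact (harc s (hR s hs.le).2.1).2.le
  have hconv : ConvexOn ℝ (Ici R) v :=
    (hmono.mono interior_subset).convexOn_of_deriv (convex_Ici R)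
      (fun s hs => (hdiff s hs).continuousAt.continuousWithinAt)
      fun s hs => (hdiff s (interior_subset hs)).differentiableWithinAt
  exact tendsto_deriv_zero_of_convexOn hconv hdiff hlim

lemma exists_tendsto_of_not_bddAbove_descentSet (hv : DampedSol c f v) (hT : 0 ≤ T)
    (hb : ¬BddAbove (descentSet v T)) : ∃ l, Tendsto v atTop (𝓝 l) := by
  have harc : ∀ s, T + 1 ≤ s → 0 < v s ∧ deriv v s < 0 := fun s hs =>
    pos_and_deriv_neg_of_not_bddAbove_descentSet hb ((lt_add_one T).trans_le hs)
  refine exists_tendsto_atTop_of_antitoneOn (a := T + 1)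
    (hv.antitoneOn_Ici (by positivity) fun s hs => (harc s hs.le).2) ⟨0, ?_⟩
  rintro _ ⟨s, hs, rfl⟩
  exact (harc s hs).1.le

lemma descentSet_eq_Ioc (hv : DampedSol c f v) (hT : 0 ≤ T) (h : DescendsTo v T z) :
    descentSet v T = Ioc T z := by
  have hanti := hv.strictAntiOn_Icc hT fun s hs => h.deriv_neg s (Ioo_subset_Ioc_self hs)
  ext r
  refine ⟨fun hr => ⟨hr.1, ?_⟩, fun hr => ⟨hr.1, fun s hs => ?_⟩⟩
  · by_contra! hzr
    exact (hr.2 z ⟨h.lt, hzr⟩).1.ne' h.eq_zero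
  · have hsz : s < z := hs.2.trans_le hr.2
    exact ⟨h.eq_zero ▸ hanti ⟨hs.1.le, hsz.le⟩ (right_mem_Icc.2 h.lt.le) hsz,
      h.deriv_neg s ⟨hs.1, hsz.le⟩⟩

lemma exists_turnsAt (hv : DampedSol c f v) (hz : 0 ≤ z) (hdz : deriv v z < 0) (hzr : z ≤ r)
    (hdr : 0 ≤ deriv v r) : ∃ T ≤ r, TurnsAt v z T := by
  obtain ⟨T, hT, hcrit, hlt⟩ := exists_first_eq_of_lt_of_le hzr
    (hv.continuousOn_deriv.mono fun s hs => hz.trans hs.1) hdz hdr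
  exact ⟨T, hT.2, hT.1, hlt, hcrit⟩

lemma exists_descent_past {U : Set ℝ} (hv : DampedSol c f v) (hT : 0 ≤ T)
    (hz : DescendsTo v T z) (hU : U ∈ 𝓝 z) :
    ∃ x y, T < x ∧ x < y ∧ Icc x y ⊆ U ∧ 0 < v x ∧ v y < 0 ∧ ∀ s ∈ Ioc T y, deriv v s < 0 := by
  have hdz : ∀ᶠ s in 𝓝 z, deriv v s < 0 :=
    (hv.continuousOn_deriv.continuousAt (Ici_mem_nhds (hT.trans_lt hz.lt))).eventually
      (gt_mem_nhds (hz.deriv_neg z (right_mem_Ioc.2 hz.lt)))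
  obtain ⟨l, R, ⟨hlz, hzR⟩, hlR⟩ := mem_nhds_iff_exists_Ioo_subset.1 (inter_mem hU hdz)
  obtain ⟨x, hx, hxz⟩ := exists_between (max_lt hlz hz.lt)
  obtain ⟨y, hzy, hyR⟩ := exists_between hzR
  obtain ⟨hlx, hTx⟩ := max_lt_iff.1 hx
  have hdesc : ∀ s ∈ Ioc T y, deriv v s < 0 := fun s hs => by
    rcases le_or_gt s z with hsz | hzs
    · exact hz.deriv_neg s ⟨hs.1, hsz⟩
    · exact (hlR ⟨hlz.trans hzs, hs.2.trans_lt hyR⟩).2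
  have hanti := hv.strictAntiOn_Icc hT fun s hs => hdesc s (Ioo_subset_Ioc_self hs)
  have hzmem : z ∈ Icc T y := ⟨hz.lt.le, hzy.le⟩
  exact ⟨x, y, hTx, hxz.trans hzy, fun s hs => (hlR ⟨hlx.trans_le hs.1, hs.2.trans_lt hyR⟩).1,
    hz.eq_zero ▸ hanti ⟨hTx.le, (hxz.trans hzy).le⟩ hzmem hxz,
    hz.eq_zero ▸ hanti hzmem (right_mem_Icc.2 (hz.lt.trans hzy).le) hzy, hdesc⟩

lemma exists_turn_past {U : Set ℝ} (hf : SignCondition f b) (hv : DampedSol c f v) (hz : 0 ≤ z)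
    (hT : TurnsAt v z T) (hb : v T < -b) (hU : U ∈ 𝓝 T) :
    ∃ x y, z < x ∧ x < y ∧ Icc x y ⊆ U ∧ 0 < deriv v y ∧ ∀ s ∈ Icc z x, deriv v s < 0 := by
  have hT0 : 0 < T := hz.trans_lt hT.lt
  have hbT : ∀ᶠ s in 𝓝 T, v s < -b :=
    (hv.continuousOn.continuousAt (Ici_mem_nhds hT0)).eventually (gt_mem_nhds hb)
  obtain ⟨l, R, ⟨hlT, hTR⟩, hlR⟩ := mem_nhds_iff_exists_Ioo_subset.1 (inter_mem hU hbT)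
  obtain ⟨x, hx, hxT⟩ := exists_between (max_lt hlT hT.lt)
  obtain ⟨y, hTy, hyR⟩ := exists_between hTR
  obtain ⟨hlx, hzx⟩ := max_lt_iff.1 hx
  have hdy : deriv (fun s => -v s) y < 0 :=
    (hv.neg hf.odd).deriv_neg_of_forall_lt hf.pos_of_lt hT0.le
      (by rw [deriv.fun_neg, hT.deriv_eq_zero, neg_zero]) hTy fun s hs =>
        lt_neg.1 (hlR ⟨hlT.trans hs.1, hs.2.trans_lt hyR⟩).2
  rw [deriv.fun_neg, neg_lt_zero] at hdy
  exact ⟨x, y, hzx, hxT.trans hTy, fun s hs => (hlR ⟨hlx.trans_le hs.1, hs.2.trans_lt hyR⟩).1,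
    hdy, fun s hs => hT.deriv_neg s ⟨hs.1, hs.2.trans_lt hxT⟩⟩

end DampedSol

/-! ### Persistence of zeros and turning points -/

/-- A family of solutions of the damped equation parametrized by `α > 0`, starting with zero slope
at a nonzero height, with `w α r` and `deriv (w α) r` jointly continuous in `(α, r)`. -/
structure ShootingFamily (c f : ℝ → ℝ) (w : ℝ → ℝ → ℝ) : Prop where
  sol : ∀ α, 0 < α → DampedSol c f (w α)
  ne_zero : ∀ α, 0 < α → w α 0 ≠ 0
  deriv_zero : ∀ α, 0 < α → deriv (w α) 0 = 0
  continuousOn : ContinuousOn (fun p : ℝ × ℝ => w p.1 p.2) (Ioi 0 ×ˢ Ici 0)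
  continuousOn_deriv : ContinuousOn (fun p : ℝ × ℝ => deriv (w p.1) p.2) (Ioi 0 ×ˢ Ici 0)

namespace ShootingFamily

variable {c f : ℝ → ℝ} {w : ℝ → ℝ → ℝ} {b a r : ℝ}

lemma neg (hodd : ∀ s, f (-s) = -f s) (hw : ShootingFamily c f w) :
    ShootingFamily c f fun α r => -w α r where
  sol α hα := (hw.sol α hα).neg hodd
  ne_zero α hα := neg_ne_zero.2 (hw.ne_zero α hα)
  deriv_zero α hα := by rw [deriv.fun_neg, hw.deriv_zero α hα, neg_zero]
  continuousOn := hw.continuousOn.neg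
  continuousOn_deriv := by
    simp only [deriv.fun_neg]
    exact hw.continuousOn_deriv.neg

lemma continuousAt_param (hw : ShootingFamily c f w) (ha : 0 < a) (hr : 0 < r) :
    ContinuousAt (fun α => w α r) a :=
  (hw.continuousOn.continuousAt (x := (a, r))
    (prod_mem_nhds (Ioi_mem_nhds ha) (Ici_mem_nhds hr))).comp (f := fun α => (α, r)) (by fun_prop)

lemma continuousAt_deriv (hw : ShootingFamily c f w) (ha : 0 < a) (hr : 0 < r) :
    ContinuousAt (fun p : ℝ × ℝ => deriv (w p.1) p.2) (a, r) :=
  hw.continuousOn_deriv.continuousAt (prod_mem_nhds (Ioi_mem_nhds ha) (Ici_mem_nhds hr))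

lemma eventually_deriv_neg (hw : ShootingFamily c f w) (ha : 0 < a) (hr : 0 < r)
    (hd : deriv (w a) r < 0) : ∀ᶠ p in 𝓝 (a, r), deriv (w p.1) p.2 < 0 :=
  (hw.continuousAt_deriv ha hr).eventually (gt_mem_nhds hd)

lemma eventually_deriv_neg_right_of_crit {T : ℝ → ℝ} (hpos : ∀ s, b < s → 0 < f s)
    (hw : ShootingFamily c f w) (ha : 0 < a) (hT : ContinuousAt T a) (hT0 : ∀ α, 0 ≤ T α)
    (hcrit : ∀ᶠ α in 𝓝 a, deriv (w α) (T α) = 0) (hb : b < w a (T a)) :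
    ∀ᶠ p in 𝓝 (a, T a), T p.1 < p.2 → deriv (w p.1) p.2 < 0 := by
  have hnear : ∀ᶠ p in 𝓝[Ioi 0 ×ˢ Ici 0] (a, T a), b < w p.1 p.2 :=
    (hw.continuousOn (a, T a) ⟨ha, hT0 a⟩).eventually (lt_mem_nhds hb)
  obtain ⟨ε, hε, hball⟩ := Metric.mem_nhdsWithin_iff.1 hnear
  rw [← ball_prod_same] at hball
  have hTball : ∀ᶠ α in 𝓝 a, T α ∈ Metric.ball (T a) ε :=
    hT.eventually (Metric.ball_mem_nhds (T a) hε)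
  filter_upwards [prod_mem_nhds (Metric.ball_mem_nhds a hε) (Metric.ball_mem_nhds (T a) hε),
    continuousAt_fst.eventually hTball, continuousAt_fst.eventually hcrit,
    continuousAt_fst.eventually (Ioi_mem_nhds ha)] with p hp hTp hcritp hp0 hlt
  refine (hw.sol p.1 hp0).deriv_neg_of_forall_lt hpos (hT0 p.1) hcritp hlt fun s hs => ?_
  have hsball : s ∈ Metric.ball (T a) ε :=
    (convex_ball (T a) ε).ordConnected.out hTp hp.2 (Ioc_subset_Icc_self hs)
  exact @hball (p.1, s) ⟨⟨hp.1, hsball⟩, hp0, (hT0 p.1).trans hs.1.le⟩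

lemma eventually_descendsTo {T : ℝ → ℝ} {z : ℝ} {U : Set ℝ} (hf : SignCondition f b)
    (hw : ShootingFamily c f w) (ha : 0 < a) (hT : ContinuousAt T a) (hT0 : ∀ α, 0 ≤ T α)
    (hcrit : ∀ᶠ α in 𝓝 a, deriv (w α) (T α) = 0) (hz : DescendsTo (w a) (T a) z)
    (hU : U ∈ 𝓝 z) : ∀ᶠ α in 𝓝 a, ∃ t ∈ U, DescendsTo (w α) (T α) t := by
  have hb : b < w a (T a) := by
    refine (hw.sol a ha).lt_of_descentSet_nonempty hf.nonpos (hT0 a) hcrit.self_of_nhds ?_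
    rw [(hw.sol a ha).descentSet_eq_Ioc (hT0 a) hz]
    exact nonempty_Ioc.2 hz.lt
  obtain ⟨x, y, hTx, hxy, hxyU, hx, hy, hdesc⟩ := (hw.sol a ha).exists_descent_past (hT0 a) hz hU
  have hx0 : 0 < x := (hT0 a).trans_lt hTx
  have hdesc_near : ∀ᶠ α in 𝓝 a, ∀ s ∈ Ioc (T α) y, deriv (w α) s < 0 :=
    eventually_forall_mem_Ioc (P := fun α s => deriv (w α) s < 0) hT
      (hw.eventually_deriv_neg_right_of_crit hf.pos_of_lt ha hT hT0 hcrit hb) fun s hs =>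
        hw.eventually_deriv_neg ha ((hT0 a).trans_lt hs.1) (hdesc s hs)
  filter_upwards [hdesc_near, (hw.continuousAt_param ha hx0).eventually (lt_mem_nhds hx),
    (hw.continuousAt_param ha (hx0.trans hxy)).eventually (gt_mem_nhds hy),
    hT.eventually (gt_mem_nhds hTx), Ioi_mem_nhds ha] with α hdescα hxα hyα hTα hα
  obtain ⟨t, ht, ht0⟩ := intermediate_value_Ioo' hxy.le
    ((hw.sol α hα).continuousOn.mono fun s hs => hx0.le.trans hs.1) ⟨hyα, hxα⟩
  exact ⟨t, hxyU (Ioo_subset_Icc_self ht), hTα.trans ht.1,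
    fun s hs => hdescα s ⟨hs.1, hs.2.trans ht.2.le⟩, ht0⟩

lemma eventually_turnsAt {z : ℝ → ℝ} {T : ℝ} {U : Set ℝ} (hf : SignCondition f b)
    (hw : ShootingFamily c f w) (ha : 0 < a) (hz : ContinuousAt z a) (hz0 : 0 < z a)
    (hT : TurnsAt (w a) (z a) T) (hb : w a T < -b) (hU : U ∈ 𝓝 T) :
    ∀ᶠ α in 𝓝 a, ∃ t ∈ U, TurnsAt (w α) (z α) t := by
  obtain ⟨x, y, hzx, hxy, hxyU, hdy, hdesc⟩ := (hw.sol a ha).exists_turn_past hf hz0.le hT hb hU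
  have hy0 : 0 < y := hz0.trans (hzx.trans hxy)
  have hdz := hw.eventually_deriv_neg ha hz0 (hT.deriv_neg _ (left_mem_Ico.2 hT.lt))
  have hdesc_near : ∀ᶠ α in 𝓝 a, ∀ s ∈ Ioc (z α) x, deriv (w α) s < 0 :=
    eventually_forall_mem_Ioc (P := fun α s => deriv (w α) s < 0) hz
      (hdz.mono fun _ hp _ => hp) fun s hs =>
        hw.eventually_deriv_neg ha (hz0.trans hs.1) (hdesc s (Ioc_subset_Icc_self hs))
  filter_upwards [hdesc_near, (continuousAt_id.prodMk hz).eventually hdz,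
    ((hw.continuousAt_deriv ha hy0).comp (f := fun α => (α, y)) (by fun_prop)).eventually
      (lt_mem_nhds hdy),
    hz.eventually (Ioo_mem_nhds hz0 hzx), Ioi_mem_nhds ha] with α hdescα hdzα hdyα hzα hα
  obtain ⟨t, hty, ht⟩ := (hw.sol α hα).exists_turnsAt hzα.1.le hdzα
    (hzα.2.trans hxy).le (le_of_lt hdyα)
  have hxt : x < t := by
    by_contra! htx
    exact (hdescα t ⟨ht.lt, htx⟩).ne ht.deriv_eq_zero
  exact ⟨t, hxyU ⟨hxt.le, hty⟩, ht⟩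

end ShootingFamily

/-! ### The sets `N_k` and the points `Z_k`, `T_k` -/

section Shooting

variable {c f : ℝ → ℝ} {u : ℝ → ℝ → ℝ} {n k : ℕ} {b β α : ℝ}

lemma Hf1.signCondition (h : Hf1 f b β) : SignCondition f b := by
  obtain ⟨hodd, -, hb, -, hpos, hneg, -, -⟩ := h
  exact ⟨hodd, hb, hneg, hpos⟩

lemma Family.shootingFamily (hn : 1 ≤ n) (hu : Family n f u) :
    ShootingFamily (fun r => ((n : ℝ) - 1) / r) f u := by
  obtain ⟨hsol, hcont, hcont'⟩ := hu
  refine ⟨fun α hα => ?_, fun α hα => ?_, fun α hα => (hsol α hα).2.1, hcont, hcont'⟩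
  · obtain ⟨-, -, hcontα, hdiff, hode⟩ := hsol α hα
    refine ⟨fun r hr => div_nonneg (sub_nonneg.2 (Nat.one_le_cast.2 hn)) hr.le, hcontα,
      hcont'.comp (f := fun r => (α, r)) (by fun_prop) fun r hr => ⟨hα, hr⟩,
      fun r hr => (hdiff r hr).1, fun r hr => (hdiff r hr).2.hasDerivAt.congr_deriv ?_⟩
    linarith [hode r hr]
  · rw [(hsol α hα).1]
    exact hα.ne'

/-- `(-1)^k u`, the normalization of `u` that is positive and decreasing between `T_k` and
`Z_{k+1}`. -/
def altSign (u : ℝ → ℝ → ℝ) (k : ℕ) (α r : ℝ) : ℝ := (-1) ^ k * u α r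

/-- The set of `α` whose turning point `T_k` exists: all `α > 0` for `k = 0`, and
`N_k \ F̃_{k+1}` for `k ≥ 1`. -/
def turningSet (u : ℝ → ℝ → ℝ) : ℕ → Set ℝ
  | 0 => Ioi 0
  | k + 1 => Nk u (k + 1) \ FtilSet u (k + 2)

lemma deriv_altSign (u : ℝ → ℝ → ℝ) (k : ℕ) (α r : ℝ) :
    deriv (altSign u k α) r = (-1) ^ k * deriv (u α) r :=
  deriv_const_mul_field _

lemma altSign_succ (u : ℝ → ℝ → ℝ) (k : ℕ) : altSign u (k + 1) = fun α r => -altSign u k α r := by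
  funext α r
  simp only [altSign, pow_succ, mul_neg_one, neg_mul]

lemma deriv_altSign_eq_zero {r : ℝ} : deriv (altSign u k α) r = 0 ↔ deriv (u α) r = 0 := by
  simp [deriv_altSign]

lemma ShootingFamily.altSign (hodd : ∀ s, f (-s) = -f s) (hu : ShootingFamily c f u) (k : ℕ) :
    ShootingFamily c f (altSign u k) := by
  induction k with
  | zero =>
    have hzero : Paper.altSign u 0 = u := by
      funext α r
      rw [Paper.altSign, pow_zero, one_mul]
    rwa [hzero]
  | succ k ih => simpa only [altSign_succ] using ih.neg hodd

lemma ZsetK_succ (u : ℝ → ℝ → ℝ) (k : ℕ) (α : ℝ) :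
    ZsetK u (k + 1) α = descentSet (altSign u k α) (Tk u k α) := by
  ext r
  simp only [ZsetK, ZsetAux, descentSet, deriv_altSign, altSign, pow_succ, mem_ofPred_eq,
    Nat.add_sub_cancel, mul_neg, mul_one, neg_mul, Left.neg_neg_iff, Left.neg_pos_iff]

lemma Zk_succ (u : ℝ → ℝ → ℝ) (k : ℕ) (α : ℝ) :
    Zk u (k + 1) α = sSup (descentSet (altSign u k α) (Tk u k α)) := by
  rw [← ZsetK_succ]
  rfl

lemma Tk_succ (u : ℝ → ℝ → ℝ) (k : ℕ) (α : ℝ) :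
    Tk u (k + 1) α = sInf {r | Zk u (k + 1) α < r ∧ deriv (altSign u k α) r = 0} := by
  simp only [deriv_altSign_eq_zero]
  rfl

lemma Tk_nonneg (u : ℝ → ℝ → ℝ) (k : ℕ) (α : ℝ) : 0 ≤ Tk u k α := by
  induction k with
  | zero => exact le_rfl
  | succ k ih =>
    have hZ : 0 ≤ Zk u (k + 1) α := by
      rw [Zk_succ]
      exact Real.sSup_nonneg fun r hr => ih.trans hr.1.le
    rw [Tk_succ]
    exact Real.sInf_nonneg fun r hr => hZ.trans hr.1.le

lemma mem_Nk_succ : α ∈ Nk u (k + 1) ↔ α ∈ turningSet u k ∧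
    uAtZ u (k + 1) α = 0 ∧ (-1) ^ k * duAtZ u (k + 1) α < 0 := by
  cases k with
  | zero => simp [Nk, turningSet]
  | succ k =>
    simp only [Nk, turningSet, FtilSet, Set.mem_sdiff, mem_ofPred_eq, Nat.add_one_sub_one, not_and,
      pow_succ, mul_neg_one, neg_neg, neg_mul, neg_neg_iff_pos, and_assoc]
    tauto

lemma mem_turningSet_succ : α ∈ turningSet u (k + 1) ↔ α ∈ Nk u (k + 1) ∧
    ∃ r, Zk u (k + 1) α < r ∧ 0 ≤ deriv (altSign u k α) r := by
  simp [turningSet, FtilSet, Ftil, deriv_altSign, pow_succ]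

lemma pos_of_mem_turningSet (h : α ∈ turningSet u k) : 0 < α := by
  induction k with
  | zero => exact h
  | succ k ih => exact ih (mem_Nk_succ.1 (mem_turningSet_succ.1 h).1).1

lemma ZsetK_nonempty_of_uAtZ_eq_zero (h0 : u α 0 ≠ 0) (h : uAtZ u (k + 1) α = 0) :
    (ZsetK u (k + 1) α).Nonempty := by
  by_contra! hempty
  rw [uAtZ, hempty, if_pos bddAbove_empty, Zk_succ, ← ZsetK_succ, hempty, Real.sSup_empty] at h
  exact h0 h

lemma Gk_subset_diff (hk : 2 ≤ k) : Gk u k ⊆ Nk u (k - 1) \ FtilSet u k := by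
  obtain ⟨m, rfl⟩ := Nat.exists_eq_add_of_le' hk
  exact fun α hα => ⟨hα.1, fun hF => hα.2.1 hF.2⟩

lemma ZsetK_nonempty_of_mem_Gk (hu : ShootingFamily c f u) (hk : 2 ≤ k) (hα : α ∈ Gk u k) :
    (ZsetK u k α).Nonempty := by
  obtain ⟨m, rfl⟩ := Nat.exists_eq_add_of_le' hk
  have hturn : α ∈ turningSet u (m + 1) := Gk_subset_diff hk hα
  exact ZsetK_nonempty_of_uAtZ_eq_zero (hu.ne_zero α (pos_of_mem_turningSet hturn)) hα.2.2.1

lemma bddAbove_ZsetK_of_mem_Nk (hf : SignCondition f b) (hu : ShootingFamily c f u)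
    (h : α ∈ Nk u (k + 1)) : BddAbove (ZsetK u (k + 1) α) := by
  obtain ⟨hturn, hzero, hdneg⟩ := mem_Nk_succ.1 h
  have hsol := (hu.altSign hf.odd k).sol α (pos_of_mem_turningSet hturn)
  have hc : (-1 : ℝ) ^ k ≠ 0 := pow_ne_zero k (by norm_num)
  by_contra hb
  rw [uAtZ, if_neg hb] at hzero
  rw [duAtZ, if_neg hb] at hdneg
  rw [ZsetK_succ] at hb
  obtain ⟨l, hl⟩ := hsol.exists_tendsto_of_not_bddAbove_descentSet (Tk_nonneg u k α) hb
  have hl0 : l = 0 := by rw [← const_mul_limUnder_eq hc hl, hzero, mul_zero]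
  have hlim' := hsol.deriv_tendsto_zero hf.pos hf.nonpos
    (fun s hs => pos_and_deriv_neg_of_not_bddAbove_descentSet hb hs) (hl0 ▸ hl)
  exact hdneg.ne (const_mul_limUnder_eq hc (hlim'.congr fun r => deriv_altSign u k α r))

lemma descendsTo_Zk (hf : SignCondition f b) (hu : ShootingFamily c f u) (h : α ∈ Nk u (k + 1)) :
    DescendsTo (altSign u k α) (Tk u k α) (Zk u (k + 1) α) := by
  obtain ⟨hturn, hzero, hdneg⟩ := mem_Nk_succ.1 h
  have hb := bddAbove_ZsetK_of_mem_Nk hf hu h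
  have hne := ZsetK_nonempty_of_uAtZ_eq_zero (hu.ne_zero α (pos_of_mem_turningSet hturn)) hzero
  rw [uAtZ, if_pos hb] at hzero
  rw [duAtZ, if_pos hb, ← deriv_altSign] at hdneg
  rw [ZsetK_succ] at hb hne
  refine ⟨Zk_succ u k α ▸ lt_sSup_descentSet hb hne, fun s hs => ?_, ?_⟩
  · rcases hs.2.eq_or_lt with rfl | hlt
    · exact hdneg
    · rw [Zk_succ] at hlt
      exact (pos_and_deriv_neg_of_lt_sSup_descentSet hne ⟨hs.1, hlt⟩).2
  · rw [altSign, hzero, mul_zero]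

lemma mem_Nk_succ_of_descendsTo {z : ℝ} (hf : SignCondition f b) (hu : ShootingFamily c f u)
    (hturn : α ∈ turningSet u k) (h : DescendsTo (altSign u k α) (Tk u k α) z) :
    α ∈ Nk u (k + 1) ∧ Zk u (k + 1) α = z := by
  have hIoc := ((hu.altSign hf.odd k).sol α (pos_of_mem_turningSet hturn)).descentSet_eq_Ioc
    (Tk_nonneg u k α) h
  have hZ : Zk u (k + 1) α = z := by rw [Zk_succ, hIoc, csSup_Ioc h.lt]
  have hb : BddAbove (ZsetK u (k + 1) α) := by
    rw [ZsetK_succ, hIoc]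
    exact bddAbove_Ioc
  refine ⟨mem_Nk_succ.2 ⟨hturn, ?_, ?_⟩, hZ⟩
  · rw [uAtZ, if_pos hb, hZ]
    simpa [altSign] using h.eq_zero
  · rw [duAtZ, if_pos hb, hZ, ← deriv_altSign]
    exact h.deriv_neg z (right_mem_Ioc.2 h.lt)

lemma turnsAt_Tk (hf : SignCondition f b) (hu : ShootingFamily c f u)
    (h : α ∈ turningSet u (k + 1)) :
    TurnsAt (altSign u k α) (Zk u (k + 1) α) (Tk u (k + 1) α) := by
  obtain ⟨hN, r, hZr, hdr⟩ := mem_turningSet_succ.1 h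
  have hdesc := descendsTo_Zk hf hu hN
  obtain ⟨T, -, hT⟩ := ((hu.altSign hf.odd k).sol α (pos_of_mem_turningSet h)).exists_turnsAt
    ((Tk_nonneg u k α).trans hdesc.lt.le) (hdesc.deriv_neg _ (right_mem_Ioc.2 hdesc.lt)) hZr.le hdr
  rwa [Tk_succ, hT.sInf_eq]

lemma mem_turningSet_succ_of_turnsAt {T : ℝ} (hN : α ∈ Nk u (k + 1))
    (hT : TurnsAt (altSign u k α) (Zk u (k + 1) α) T) :
    α ∈ turningSet u (k + 1) ∧ Tk u (k + 1) α = T :=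
  ⟨mem_turningSet_succ.2 ⟨hN, T, hT.lt, hT.deriv_eq_zero.ge⟩, by rw [Tk_succ, hT.sInf_eq]⟩

lemma deriv_Tk_eq_zero (hf : SignCondition f b) (hu : ShootingFamily c f u)
    (h : α ∈ turningSet u k) : deriv (u α) (Tk u k α) = 0 := by
  cases k with
  | zero => exact hu.deriv_zero α h
  | succ k => exact deriv_altSign_eq_zero.1 (turnsAt_Tk hf hu h).deriv_eq_zero

lemma lt_altSign_Tk (hf : SignCondition f b) (hu : ShootingFamily c f u)
    (h : α ∈ turningSet u k) (hne : (ZsetK u (k + 1) α).Nonempty) :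
    b < altSign u k α (Tk u k α) :=
  ((hu.altSign hf.odd k).sol α (pos_of_mem_turningSet h)).lt_of_descentSet_nonempty hf.nonpos
    (Tk_nonneg u k α) (deriv_altSign_eq_zero.2 (deriv_Tk_eq_zero hf hu h)) (ZsetK_succ u k α ▸ hne)

lemma Nk_succ_mem_nhds (hf : SignCondition f b) (hu : ShootingFamily c f u)
    (hturn : turningSet u k ∈ 𝓝 α) (hT : ContinuousAt (Tk u k) α) (h : α ∈ Nk u (k + 1)) :
    Nk u (k + 1) ∈ 𝓝 α ∧ ContinuousAt (Zk u (k + 1)) α := by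
  have hcrit : ∀ᶠ a in 𝓝 α, deriv (altSign u k a) (Tk u k a) = 0 :=
    eventually_of_mem hturn fun a ha => deriv_altSign_eq_zero.2 (deriv_Tk_eq_zero hf hu ha)
  refine mem_nhds_and_continuousAt_of_forall_eventually fun U hU => ?_
  filter_upwards [hturn, (hu.altSign hf.odd k).eventually_descendsTo hf
    (pos_of_mem_turningSet (mem_Nk_succ.1 h).1) hT (Tk_nonneg u k) hcrit
    (descendsTo_Zk hf hu h) hU] with a ha ⟨z, hzU, hz⟩
  obtain ⟨hN, rfl⟩ := mem_Nk_succ_of_descendsTo hf hu ha hz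
  exact ⟨hN, hzU⟩

lemma turningSet_succ_mem_nhds (hf : SignCondition f b) (hu : ShootingFamily c f u)
    (hN : Nk u (k + 1) ∈ 𝓝 α) (hZ : ContinuousAt (Zk u (k + 1)) α) (h : α ∈ turningSet u (k + 1))
    (hne : (ZsetK u (k + 2) α).Nonempty) :
    turningSet u (k + 1) ∈ 𝓝 α ∧ ContinuousAt (Tk u (k + 1)) α := by
  have hb : altSign u k α (Tk u (k + 1) α) < -b := by
    have hlt := lt_altSign_Tk hf hu h hne
    rw [altSign_succ] at hlt
    exact lt_neg.1 hlt
  have hZ0 : 0 < Zk u (k + 1) α :=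
    (Tk_nonneg u k α).trans_lt (descendsTo_Zk hf hu (mem_of_mem_nhds hN)).lt
  refine mem_nhds_and_continuousAt_of_forall_eventually fun U hU => ?_
  filter_upwards [hN, (hu.altSign hf.odd k).eventually_turnsAt hf (pos_of_mem_turningSet h) hZ
    hZ0 (turnsAt_Tk hf hu h) hb hU] with a ha ⟨T, hTU, hT⟩
  obtain ⟨hturn, rfl⟩ := mem_turningSet_succ_of_turnsAt ha hT
  exact ⟨hturn, hTU⟩

lemma turningSet_mem_nhds (hf : SignCondition f b) (hu : ShootingFamily c f u)
    (h : α ∈ turningSet u k) (hne : (ZsetK u (k + 1) α).Nonempty) :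
    turningSet u k ∈ 𝓝 α ∧ ContinuousAt (Tk u k) α := by
  induction k with
  | zero => exact ⟨Ioi_mem_nhds h, continuousAt_const⟩
  | succ k ih =>
    have hN := (mem_turningSet_succ.1 h).1
    obtain ⟨hturn, hzero, -⟩ := mem_Nk_succ.1 hN
    obtain ⟨hturn_nhds, hT⟩ := ih hturn
      (ZsetK_nonempty_of_uAtZ_eq_zero (hu.ne_zero α (pos_of_mem_turningSet h)) hzero)
    obtain ⟨hN_nhds, hZ⟩ := Nk_succ_mem_nhds hf hu hturn_nhds hT hN
    exact turningSet_succ_mem_nhds hf hu hN_nhds hZ h hne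

end Shooting

end Paper

theorem nbhd_in_Nkm1_diff_Ftilk_general {c f : ℝ → ℝ} {b : ℝ} {u : ℝ → ℝ → ℝ} {k : ℕ} {αs : ℝ}
    (hf : SignCondition f b) (hu : ShootingFamily c f u) (hk : 2 ≤ k)
    (hαs : αs ∈ Nk u (k - 1) \ FtilSet u k) (hne : (ZsetK u k αs).Nonempty) :
    ∃ δ₀ : ℝ, 0 < δ₀ ∧ Ioo (αs - δ₀) (αs + δ₀) ⊆ Nk u (k - 1) \ FtilSet u k := by
  obtain ⟨m, rfl⟩ := Nat.exists_eq_add_of_le' hk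
  obtain ⟨δ₀, hδ₀, hball⟩ := Metric.mem_nhds_iff.1 (turningSet_mem_nhds hf hu hαs hne).1
  exact ⟨δ₀, hδ₀, Real.ball_eq_Ioo αs δ₀ ▸ hball⟩

/-- **Proposition 2.2.** If `α* ∈ G_k`, `k ≥ 2`, then a whole neighborhood of `α*` is
contained in `N_{k-1} \ F̃_k`. -/
theorem nbhd_in_Nkm1_diff_Ftilk
    (n : ℕ) (hn : 2 ≤ n)
    (f : ℝ → ℝ) (b β : ℝ) (hf : Continuous f)
    (h1 : Hf1 f b β) (h2 : Hf2 f)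
    (u : ℝ → ℝ → ℝ) (hu : Family n f u)
    (k : ℕ) (hk : 2 ≤ k) (αs : ℝ) (hαs : αs ∈ Gk u k) :
    ∃ δ₀ : ℝ, 0 < δ₀ ∧ Ioo (αs - δ₀) (αs + δ₀) ⊆ Nk u (k - 1) \ FtilSet u k := by
  have hfam := hu.shootingFamily (one_le_two.trans hn)
  exact nbhd_in_Nkm1_diff_Ftilk_general h1.signCondition hfam hk (Gk_subset_diff hk hαs)
    (ZsetK_nonempty_of_mem_Gk hfam hk hαs)
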